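/- Let α = (N; A, B, C, D; X, N⁻, N⁺) be an arbitrary multiparametric LSDS and let X₁ ⊆ X be the smallest closed subspace that contains the ranges of all B_k and of all C_j* (k, j = 1,…,N) and is invariant under every A_k and every A_k*. Then: (i) with respect to X = X₁^⊥ ⊕ X₁ each A_k is block diagonal (X₁ reduces A_k), each B_k maps into X₁, and each C_k vanishes on X₁^⊥; the compressed system α₁ = (N; A|X₁, B, C|X₁, D; X₁, N⁻, N⁺) is closely connected. (ii) If α is dissipative (respectively conservative), i.e. ‖ζG‖ ≤ 1 (respectively ζG unitary) for all ζ ∈ T^N, then α₁ is dissipative (respectively conservative). (iii) θ_{α₁}(z) = θ_α(z) for all z in the open unit polydisc D^N on which both transfer functions are defined. -/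

import Mathlib

open ContinuousLinearMap

noncomputable section

/-- The block operator `[[A, B], [C, D]] : X ⊕ N⁻ → X ⊕ N⁺` (Hilbert space direct sum). -/
def blockOp {X Nm Np : Type*}
    [NormedAddCommGroup X] [InnerProductSpace ℂ X]
    [NormedAddCommGroup Nm] [InnerProductSpace ℂ Nm]
    [NormedAddCommGroup Np] [InnerProductSpace ℂ Np]
    (A : X →L[ℂ] X) (B : Nm →L[ℂ] X) (C : X →L[ℂ] Np) (D : Nm →L[ℂ] Np) :
    WithLp 2 (X × Nm) →L[ℂ] WithLp 2 (X × Np) :=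
  ((WithLp.prodContinuousLinearEquiv 2 ℂ X Np).symm :
      (X × Np) →L[ℂ] WithLp 2 (X × Np)) ∘L
    ((A ∘L ContinuousLinearMap.fst ℂ X Nm + B ∘L ContinuousLinearMap.snd ℂ X Nm).prod
      (C ∘L ContinuousLinearMap.fst ℂ X Nm + D ∘L ContinuousLinearMap.snd ℂ X Nm)) ∘L
    (WithLp.prodContinuousLinearEquiv 2 ℂ X Nm : WithLp 2 (X × Nm) →L[ℂ] (X × Nm))

/-- A bounded operator between Hilbert spaces is unitary: `G*G = I` and `GG* = I`. -/
def IsUnitaryOp {E F : Type*}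
    [NormedAddCommGroup E] [InnerProductSpace ℂ E] [CompleteSpace E]
    [NormedAddCommGroup F] [InnerProductSpace ℂ F] [CompleteSpace F]
    (G : E →L[ℂ] F) : Prop :=
  adjoint G ∘L G = ContinuousLinearMap.id ℂ E ∧
    G ∘L adjoint G = ContinuousLinearMap.id ℂ F

/-- Close connectedness of a multiparametric system. -/
def CloselyConnectedN {Nn : ℕ} {X Nm Np : Type*}
    [NormedAddCommGroup X] [InnerProductSpace ℂ X] [CompleteSpace X]
    [NormedAddCommGroup Nm] [InnerProductSpace ℂ Nm] [CompleteSpace Nm]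
    [NormedAddCommGroup Np] [InnerProductSpace ℂ Np] [CompleteSpace Np]
    (A : Fin Nn → (X →L[ℂ] X)) (B : Fin Nn → (Nm →L[ℂ] X))
    (C : Fin Nn → (X →L[ℂ] Np)) : Prop :=
  (Submodule.span ℂ {x : X | ∃ (w : List (Fin Nn × Bool)) (y : X),
      ((∃ k u, y = B k u) ∨ (∃ j v, y = adjoint (C j) v)) ∧
      x = ((w.map fun p => cond p.2 (A p.1) (adjoint (A p.1))).prod) y}).topologicalClosure
    = ⊤

/-!
The inclusion `J` of `X₁` into `X` is an isometry intertwining all the operators of `α₁` and their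
adjoints with those of `α`. Hence `J ⊕ I` intertwines `ζG₁` with `ζG` and `(ζG₁)*` with `(ζG)*`,
which transfers contractivity and unitarity, and `J* (I - zA)⁻¹ J` inverts `I - zA₁`, which
transfers the transfer function. Finally, `J` maps the closed span generated by `α₁` onto a closed
subspace of `X` competing in the definition of `X₁`, so that span is everything by minimality.
-/

theorem isUnit_and_inverse_eq_of_retract {R E E₁ : Type*} [Semiring R]
    [TopologicalSpace E] [AddCommMonoid E] [Module R E]
    [TopologicalSpace E₁] [AddCommMonoid E₁] [Module R E₁] {J : E₁ →L[R] E} {K : E →L[R] E₁}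
    {T₁ : E₁ →L[R] E₁} {T : E →L[R] E} (hKJ : ∀ x, K (J x) = x) (hJ : ∀ x, J (T₁ x) = T (J x))
    (hK : ∀ x, K (T x) = T₁ (K x)) (hT : IsUnit T) :
    IsUnit T₁ ∧ Ring.inverse T₁ = K ∘L Ring.inverse T ∘L J := by
  have hright (x : E) : T (Ring.inverse T x) = x :=
    DFunLike.congr_fun (Ring.mul_inverse_cancel T hT) x
  have hleft (x : E) : Ring.inverse T (T x) = x :=
    DFunLike.congr_fun (Ring.inverse_mul_cancel T hT) x
  let u : (E₁ →L[R] E₁)ˣ :=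
    { val := T₁
      inv := K ∘L Ring.inverse T ∘L J
      val_inv := by
        ext x
        change T₁ (K (Ring.inverse T (J x))) = x
        rw [← hK, hright, hKJ]
      inv_val := by
        ext x
        change K (Ring.inverse T (J (T₁ x))) = x
        rw [hJ, hleft, hKJ] }
  exact ⟨u.isUnit, Ring.inverse_unit u⟩

theorem opNorm_le_of_intertwine {𝕜 E E₁ F F₁ : Type*} [NontriviallyNormedField 𝕜]
    [SeminormedAddCommGroup E] [NormedSpace 𝕜 E] [SeminormedAddCommGroup E₁] [NormedSpace 𝕜 E₁]
    [SeminormedAddCommGroup F] [NormedSpace 𝕜 F] [SeminormedAddCommGroup F₁] [NormedSpace 𝕜 F₁]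
    {U : E₁ →ₗᵢ[𝕜] E} {V : F₁ →ₗᵢ[𝕜] F} {G₁ : E₁ →L[𝕜] F₁} {G : E →L[𝕜] F}
    (hG : ∀ x, V (G₁ x) = G (U x)) : ‖G₁‖ ≤ ‖G‖ :=
  G₁.opNorm_le_bound (norm_nonneg G) fun x ↦ by
    rw [← V.norm_map, hG, ← U.norm_map x]
    exact G.le_opNorm (U x)

theorem map_adjoint_of_intertwine {𝕜 E E₁ F F₁ : Type*} [RCLike 𝕜]
    [NormedAddCommGroup E] [InnerProductSpace 𝕜 E] [CompleteSpace E]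
    [NormedAddCommGroup E₁] [InnerProductSpace 𝕜 E₁] [CompleteSpace E₁]
    [NormedAddCommGroup F] [InnerProductSpace 𝕜 F] [CompleteSpace F]
    [NormedAddCommGroup F₁] [InnerProductSpace 𝕜 F₁] [CompleteSpace F₁]
    {J : E₁ →ₗᵢ[𝕜] E} {K : F₁ →ₗᵢ[𝕜] F} {G₁ : E₁ →L[𝕜] F₁} {G : E →L[𝕜] F}
    (hG : ∀ x, K (G₁ x) = G (J x)) {y : F₁} (hy : adjoint G (K y) ∈ J.range) :
    J (adjoint G₁ y) = adjoint G (K y) := by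
  obtain ⟨x, hx⟩ := hy
  have hx : J x = adjoint G (K y) := hx
  suffices adjoint G₁ y = x by rw [this, hx]
  refine ext_inner_left 𝕜 fun v ↦ ?_
  rw [adjoint_inner_right, ← K.inner_map_map, hG, ← adjoint_inner_right, ← hx, J.inner_map_map]

theorem IsUnitaryOp.of_intertwine {E E₁ F F₁ : Type*}
    [NormedAddCommGroup E] [InnerProductSpace ℂ E] [CompleteSpace E]
    [NormedAddCommGroup E₁] [InnerProductSpace ℂ E₁] [CompleteSpace E₁]
    [NormedAddCommGroup F] [InnerProductSpace ℂ F] [CompleteSpace F]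
    [NormedAddCommGroup F₁] [InnerProductSpace ℂ F₁] [CompleteSpace F₁]
    {U : E₁ →ₗᵢ[ℂ] E} {V : F₁ →ₗᵢ[ℂ] F} {G₁ : E₁ →L[ℂ] F₁} {G : E →L[ℂ] F}
    (h : IsUnitaryOp G) (hG : ∀ x, V (G₁ x) = G (U x))
    (hGadj : ∀ y, U (adjoint G₁ y) = adjoint G (V y)) : IsUnitaryOp G₁ := by
  constructor
  · ext x
    apply U.injective
    rw [comp_apply, hGadj, hG]
    exact DFunLike.congr_fun h.1 (U x)
  · ext y
    apply V.injective
    rw [comp_apply, hG, hGadj]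
    exact DFunLike.congr_fun h.2 (V y)

section BlockOp

variable {X Nm Np : Type*}
  [NormedAddCommGroup X] [InnerProductSpace ℂ X]
  [NormedAddCommGroup Nm] [InnerProductSpace ℂ Nm]
  [NormedAddCommGroup Np] [InnerProductSpace ℂ Np]

theorem blockOp_apply (A : X →L[ℂ] X) (B : Nm →L[ℂ] X) (C : X →L[ℂ] Np) (D : Nm →L[ℂ] Np)
    (x : WithLp 2 (X × Nm)) :
    blockOp A B C D x = WithLp.toLp 2 (A x.fst + B x.snd, C x.fst + D x.snd) :=
  rfl

theorem adjoint_blockOp [CompleteSpace X] [CompleteSpace Nm] [CompleteSpace Np]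
    (A : X →L[ℂ] X) (B : Nm →L[ℂ] X) (C : X →L[ℂ] Np) (D : Nm →L[ℂ] Np) :
    adjoint (blockOp A B C D) = blockOp (adjoint A) (adjoint C) (adjoint B) (adjoint D) := by
  refine ((eq_adjoint_iff _ _).2 fun x y ↦ ?_).symm
  simp only [blockOp_apply, WithLp.prod_inner_apply, inner_add_left, inner_add_right,
    adjoint_inner_left, WithLp.fst, WithLp.snd]
  ring

end BlockOp

/-- The isometry `J` embeds a system with main, input and output operators `A₁`, `B₁`, `C₁` into
one with operators `A`, `B`, `C`, as its part on a subspace that reduces `A` and contains the ranges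
of `B` and `C*`. The relation between the output operators is stated for their adjoints, which
makes the notion invariant under passing to the adjoint systems. -/
structure IsReducingEmbedding {𝕜 X X₁ Nm Np : Type*} [RCLike 𝕜]
    [NormedAddCommGroup X] [InnerProductSpace 𝕜 X] [CompleteSpace X]
    [NormedAddCommGroup X₁] [InnerProductSpace 𝕜 X₁] [CompleteSpace X₁]
    [NormedAddCommGroup Nm] [InnerProductSpace 𝕜 Nm]
    [NormedAddCommGroup Np] [InnerProductSpace 𝕜 Np] [CompleteSpace Np]
    (J : X₁ →ₗᵢ[𝕜] X) (A₁ : X₁ →L[𝕜] X₁) (B₁ : Nm →L[𝕜] X₁) (C₁ : X₁ →L[𝕜] Np)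
    (A : X →L[𝕜] X) (B : Nm →L[𝕜] X) (C : X →L[𝕜] Np) : Prop where
  map_main : ∀ x, J (A₁ x) = A (J x)
  map_adjoint_main : ∀ x, J (adjoint A₁ x) = adjoint A (J x)
  map_input : ∀ u, J (B₁ u) = B u
  map_adjoint_output : ∀ v, J (adjoint C₁ v) = adjoint C v

namespace IsReducingEmbedding

section

variable {𝕜 X X₁ Nm Np : Type*} [RCLike 𝕜]
  [NormedAddCommGroup X] [InnerProductSpace 𝕜 X] [CompleteSpace X]
  [NormedAddCommGroup X₁] [InnerProductSpace 𝕜 X₁] [CompleteSpace X₁]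
  [NormedAddCommGroup Nm] [InnerProductSpace 𝕜 Nm]
  [NormedAddCommGroup Np] [InnerProductSpace 𝕜 Np] [CompleteSpace Np]
  {J : X₁ →ₗᵢ[𝕜] X} {A₁ : X₁ →L[𝕜] X₁} {B₁ : Nm →L[𝕜] X₁} {C₁ : X₁ →L[𝕜] Np}
  {A : X →L[𝕜] X} {B : Nm →L[𝕜] X} {C : X →L[𝕜] Np}

theorem adjoint_apply_main (h : IsReducingEmbedding J A₁ B₁ C₁ A B C) (x : X) :
    adjoint J.toContinuousLinearMap (A x) = A₁ (adjoint J.toContinuousLinearMap x) := by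
  refine ext_inner_left 𝕜 fun v ↦ ?_
  rw [adjoint_inner_right, ← adjoint_inner_left A, ← adjoint_inner_left A₁, adjoint_inner_right]
  exact congrArg (inner 𝕜 · x) (h.map_adjoint_main v).symm

theorem output_adjoint_apply (h : IsReducingEmbedding J A₁ B₁ C₁ A B C) (x : X) :
    C₁ (adjoint J.toContinuousLinearMap x) = C x := by
  refine ext_inner_left 𝕜 fun v ↦ ?_
  rw [← adjoint_inner_left C, ← adjoint_inner_left C₁, adjoint_inner_right]
  exact congrArg (inner 𝕜 · x) (h.map_adjoint_output v)

theorem output_apply (h : IsReducingEmbedding J A₁ B₁ C₁ A B C) (x : X₁) :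
    C₁ x = C (J x) := by
  rw [← h.output_adjoint_apply]
  exact congrArg C₁ (DFunLike.congr_fun J.adjoint_comp_self x).symm

theorem adjoint_system [CompleteSpace Nm] (h : IsReducingEmbedding J A₁ B₁ C₁ A B C) :
    IsReducingEmbedding J (adjoint A₁) (adjoint C₁) (adjoint B₁)
      (adjoint A) (adjoint C) (adjoint B) where
  map_main := h.map_adjoint_main
  map_adjoint_main := by simpa only [adjoint_adjoint] using h.map_main
  map_input := h.map_adjoint_output
  map_adjoint_output := by simpa only [adjoint_adjoint] using h.map_input

theorem isUnit_and_transfer_eq (h : IsReducingEmbedding J A₁ B₁ C₁ A B C)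
    (hA : IsUnit (1 - A)) :
    IsUnit (1 - A₁) ∧
      C₁ ∘L Ring.inverse (1 - A₁) ∘L B₁ = C ∘L Ring.inverse (1 - A) ∘L B := by
  obtain ⟨hunit, hinv⟩ := isUnit_and_inverse_eq_of_retract (J := J.toContinuousLinearMap)
    (K := adjoint J.toContinuousLinearMap) (T₁ := 1 - A₁) (T := 1 - A)
    (fun x ↦ DFunLike.congr_fun J.adjoint_comp_self x)
    (fun x ↦ by simp [h.map_main]) (fun x ↦ by simp [h.adjoint_apply_main]) hA
  refine ⟨hunit, ?_⟩
  ext u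
  simp [hinv, h.output_adjoint_apply, h.map_input]

theorem sum_smul {ι : Type*} [Fintype ι]
    {A₁ : ι → X₁ →L[𝕜] X₁} {B₁ : ι → Nm →L[𝕜] X₁} {C₁ : ι → X₁ →L[𝕜] Np}
    {A : ι → X →L[𝕜] X} {B : ι → Nm →L[𝕜] X} {C : ι → X →L[𝕜] Np}
    (h : ∀ k, IsReducingEmbedding J (A₁ k) (B₁ k) (C₁ k) (A k) (B k) (C k)) (z : ι → 𝕜) :
    IsReducingEmbedding J (∑ k, z k • A₁ k) (∑ k, z k • B₁ k) (∑ k, z k • C₁ k)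
      (∑ k, z k • A k) (∑ k, z k • B k) (∑ k, z k • C k) where
  map_main x := by simp [(h _).map_main]
  map_adjoint_main x := by simp [map_smulₛₗ, (h _).map_adjoint_main]
  map_input u := by simp [(h _).map_input]
  map_adjoint_output v := by simp [map_smulₛₗ, (h _).map_adjoint_output]

end

section

variable {X X₁ Nm Np : Type*}
  [NormedAddCommGroup X] [InnerProductSpace ℂ X] [CompleteSpace X]
  [NormedAddCommGroup X₁] [InnerProductSpace ℂ X₁] [CompleteSpace X₁]
  [NormedAddCommGroup Nm] [InnerProductSpace ℂ Nm]
  [NormedAddCommGroup Np] [InnerProductSpace ℂ Np] [CompleteSpace Np]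
  {J : X₁ →ₗᵢ[ℂ] X} {A₁ : X₁ →L[ℂ] X₁} {B₁ : Nm →L[ℂ] X₁} {C₁ : X₁ →L[ℂ] Np}
  {A : X →L[ℂ] X} {B : Nm →L[ℂ] X} {C : X →L[ℂ] Np}

theorem map_blockOp (h : IsReducingEmbedding J A₁ B₁ C₁ A B C) (D : Nm →L[ℂ] Np)
    (x : WithLp 2 (X₁ × Nm)) :
    J.withLpProdMap 2 LinearIsometry.id (blockOp A₁ B₁ C₁ D x) =
      blockOp A B C D (J.withLpProdMap 2 LinearIsometry.id x) := by
  simp [blockOp_apply, h.map_main, h.map_input, h.output_apply]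

theorem norm_blockOp_le (h : IsReducingEmbedding J A₁ B₁ C₁ A B C) (D : Nm →L[ℂ] Np) :
    ‖blockOp A₁ B₁ C₁ D‖ ≤ ‖blockOp A B C D‖ :=
  opNorm_le_of_intertwine (h.map_blockOp D)

theorem isUnitaryOp_blockOp [CompleteSpace Nm] (h : IsReducingEmbedding J A₁ B₁ C₁ A B C)
    {D : Nm →L[ℂ] Np} (hG : IsUnitaryOp (blockOp A B C D)) : IsUnitaryOp (blockOp A₁ B₁ C₁ D) :=
  hG.of_intertwine (h.map_blockOp D) <| by
    simpa only [adjoint_blockOp] using h.adjoint_system.map_blockOp (adjoint D)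

end

end IsReducingEmbedding

section ReducingSubspace

variable {𝕜 ι X X₁ Nm Np : Type*} [RCLike 𝕜]
  [NormedAddCommGroup X] [InnerProductSpace 𝕜 X] [CompleteSpace X]
  [NormedAddCommGroup X₁] [InnerProductSpace 𝕜 X₁] [CompleteSpace X₁]
  [NormedAddCommGroup Nm] [InnerProductSpace 𝕜 Nm]
  [NormedAddCommGroup Np] [InnerProductSpace 𝕜 Np] [CompleteSpace Np]

/-- A closed subspace that reduces every `A k` and contains the ranges of every `B k` and every
adjoint of `C k`. The state space of the closely connected part of a system is the least one. -/
structure IsReducingSubspace (A : ι → X →L[𝕜] X) (B : ι → Nm →L[𝕜] X) (C : ι → X →L[𝕜] Np)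
    (Y : Submodule 𝕜 X) : Prop where
  isClosed : IsClosed (Y : Set X)
  input_mem : ∀ k u, B k u ∈ Y
  adjoint_output_mem : ∀ k v, adjoint (C k) v ∈ Y
  main_mem : ∀ k, ∀ x ∈ Y, A k x ∈ Y
  adjoint_main_mem : ∀ k, ∀ x ∈ Y, adjoint (A k) x ∈ Y

/-- The closed linear span of the orbits of the ranges of `B k` and of the adjoints of `C k` under
words in the `A k` (letter `(k, true)`) and their adjoints (letter `(k, false)`); a system is
closely connected when it is the whole space. -/
def connectedSubspace (A : ι → X →L[𝕜] X) (B : ι → Nm →L[𝕜] X) (C : ι → X →L[𝕜] Np) :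
    Submodule 𝕜 X :=
  (Submodule.span 𝕜 {x : X | ∃ (w : List (ι × Bool)) (y : X),
      ((∃ k u, y = B k u) ∨ (∃ j v, y = adjoint (C j) v)) ∧
      x = ((w.map fun p => cond p.2 (A p.1) (adjoint (A p.1))).prod) y}).topologicalClosure

variable {A : ι → X →L[𝕜] X} {B : ι → Nm →L[𝕜] X} {C : ι → X →L[𝕜] Np}

theorem isReducingSubspace_connectedSubspace :
    IsReducingSubspace A B C (connectedSubspace A B C) where
  isClosed := Submodule.isClosed_topologicalClosure _
  input_mem k u := subset_closure <| Submodule.subset_span ⟨[], _, .inl ⟨k, u, rfl⟩, rfl⟩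
  adjoint_output_mem k v := subset_closure <| Submodule.subset_span ⟨[], _, .inr ⟨k, v, rfl⟩, rfl⟩
  main_mem k := by
    refine Set.MapsTo.closure (Submodule.mapsTo_span (f := (A k).toLinearMap) ?_) (A k).continuous
    rintro _ ⟨w, y, hy, rfl⟩
    exact ⟨(k, true) :: w, y, hy, by simp⟩
  adjoint_main_mem k := by
    refine Set.MapsTo.closure (Submodule.mapsTo_span (f := (adjoint (A k)).toLinearMap) ?_)
      (adjoint (A k)).continuous
    rintro _ ⟨w, y, hy, rfl⟩
    exact ⟨(k, false) :: w, y, hy, by simp⟩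

namespace IsReducingSubspace

variable {Y : Submodule 𝕜 X}

theorem main_mem_orthogonal (hY : IsReducingSubspace A B C Y) (k : ι) {x : X} (hx : x ∈ Yᗮ) :
    A k x ∈ Yᗮ :=
  orthogonal_mem_invtSubmodule (hY.adjoint_main_mem k) hx

theorem output_eq_zero (hY : IsReducingSubspace A B C Y) (k : ι) {x : X} (hx : x ∈ Yᗮ) :
    C k x = 0 := by
  have hrange : (adjoint (C k)).range ≤ Y := by
    rintro _ ⟨v, rfl⟩
    exact hY.adjoint_output_mem k v
  have hker : x ∈ (adjoint (adjoint (C k))).ker :=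
    (adjoint (C k)).orthogonal_range ▸ Submodule.orthogonal_le hrange hx
  rwa [adjoint_adjoint] at hker

theorem isReducingEmbedding_subtype [CompleteSpace Y] (hY : IsReducingSubspace A B C Y)
    {A₁ : ι → Y →L[𝕜] Y} (hA₁ : ∀ k (x : Y), (A₁ k x : X) = A k x)
    {B₁ : ι → Nm →L[𝕜] Y} (hB₁ : ∀ k u, (B₁ k u : X) = B k u)
    {C₁ : ι → Y →L[𝕜] Np} (hC₁ : ∀ k (x : Y), C₁ k x = C k x) (k : ι) :
    IsReducingEmbedding Y.subtypeₗᵢ (A₁ k) (B₁ k) (C₁ k) (A k) (B k) (C k) where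
  map_main := hA₁ k
  map_adjoint_main x := map_adjoint_of_intertwine (K := Y.subtypeₗᵢ) (hA₁ k)
    ⟨⟨_, hY.adjoint_main_mem k x x.2⟩, rfl⟩
  map_input := hB₁ k
  map_adjoint_output v := map_adjoint_of_intertwine (K := LinearIsometry.id) (hC₁ k)
    ⟨⟨_, hY.adjoint_output_mem k v⟩, rfl⟩

theorem map {J : X₁ →ₗᵢ[𝕜] X}
    {A₁ : ι → X₁ →L[𝕜] X₁} {B₁ : ι → Nm →L[𝕜] X₁} {C₁ : ι → X₁ →L[𝕜] Np} {Y₁ : Submodule 𝕜 X₁}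
    (hY₁ : IsReducingSubspace A₁ B₁ C₁ Y₁)
    (h : ∀ k, IsReducingEmbedding J (A₁ k) (B₁ k) (C₁ k) (A k) (B k) (C k)) :
    IsReducingSubspace A B C (Y₁.map J.toLinearMap) where
  isClosed := J.isometry.isClosedEmbedding.isClosedMap _ hY₁.isClosed
  input_mem k u := ⟨_, hY₁.input_mem k u, (h k).map_input u⟩
  adjoint_output_mem k v := ⟨_, hY₁.adjoint_output_mem k v, (h k).map_adjoint_output v⟩
  main_mem k := by
    rintro _ ⟨x, hx, rfl⟩
    exact ⟨_, hY₁.main_mem k x hx, (h k).map_main x⟩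
  adjoint_main_mem k := by
    rintro _ ⟨x, hx, rfl⟩
    exact ⟨_, hY₁.adjoint_main_mem k x hx, (h k).map_adjoint_main x⟩

end IsReducingSubspace

theorem connectedSubspace_eq_top_of_range_le {J : X₁ →ₗᵢ[𝕜] X}
    {A₁ : ι → X₁ →L[𝕜] X₁} {B₁ : ι → Nm →L[𝕜] X₁} {C₁ : ι → X₁ →L[𝕜] Np}
    (h : ∀ k, IsReducingEmbedding J (A₁ k) (B₁ k) (C₁ k) (A k) (B k) (C k))
    (hmin : ∀ Y, IsReducingSubspace A B C Y → J.range ≤ Y) :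
    connectedSubspace A₁ B₁ C₁ = ⊤ := by
  have hle := hmin _ (isReducingSubspace_connectedSubspace.map h)
  rw [LinearMap.range_eq_map] at hle
  exact top_le_iff.1 ((Submodule.map_le_map_iff_of_injective J.injective _ _).1 hle)

end ReducingSubspace

theorem compression_to_closely_connected_general {Nn : ℕ} {X Nm Np : Type*}
    [NormedAddCommGroup X] [InnerProductSpace ℂ X] [CompleteSpace X]
    [NormedAddCommGroup Nm] [InnerProductSpace ℂ Nm] [CompleteSpace Nm]
    [NormedAddCommGroup Np] [InnerProductSpace ℂ Np] [CompleteSpace Np]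
    (A : Fin Nn → (X →L[ℂ] X)) (B : Fin Nn → (Nm →L[ℂ] X))
    (C : Fin Nn → (X →L[ℂ] Np)) (D : Fin Nn → (Nm →L[ℂ] Np))
    (X₁ : Submodule ℂ X) [CompleteSpace X₁]
    (hX₁ : IsLeast {Y | IsReducingSubspace A B C Y} X₁)
    (A₁ : Fin Nn → (X₁ →L[ℂ] X₁)) (hA₁ : ∀ k (x : X₁), (A₁ k x : X) = A k x)
    (B₁ : Fin Nn → (Nm →L[ℂ] X₁)) (hB₁ : ∀ k u, (B₁ k u : X) = B k u)
    (C₁ : Fin Nn → (X₁ →L[ℂ] Np)) (hC₁ : ∀ k (x : X₁), C₁ k x = C k x) :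
    ((∀ k, ∀ x ∈ X₁ᗮ, A k x ∈ X₁ᗮ ∧ C k x = 0) ∧ CloselyConnectedN A₁ B₁ C₁) ∧
    ((∀ ζ : Fin Nn → ℂ, (∀ k, ‖ζ k‖ = 1) →
        ‖blockOp (∑ k, ζ k • A k) (∑ k, ζ k • B k) (∑ k, ζ k • C k) (∑ k, ζ k • D k)‖ ≤ 1) →
      (∀ ζ : Fin Nn → ℂ, (∀ k, ‖ζ k‖ = 1) →
        ‖blockOp (∑ k, ζ k • A₁ k) (∑ k, ζ k • B₁ k) (∑ k, ζ k • C₁ k)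
            (∑ k, ζ k • D k)‖ ≤ 1)) ∧
    ((∀ ζ : Fin Nn → ℂ, (∀ k, ‖ζ k‖ = 1) →
        IsUnitaryOp
          (blockOp (∑ k, ζ k • A k) (∑ k, ζ k • B k) (∑ k, ζ k • C k) (∑ k, ζ k • D k))) →
      (∀ ζ : Fin Nn → ℂ, (∀ k, ‖ζ k‖ = 1) →
        IsUnitaryOp
          (blockOp (∑ k, ζ k • A₁ k) (∑ k, ζ k • B₁ k) (∑ k, ζ k • C₁ k)
            (∑ k, ζ k • D k)))) ∧
    (∀ z : Fin Nn → ℂ, IsUnit ((1 : X →L[ℂ] X) - ∑ k, z k • A k) →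
      IsUnit ((1 : X₁ →L[ℂ] X₁) - ∑ k, z k • A₁ k) ∧
        ∑ k, z k • D k +
          (∑ k, z k • C₁ k) ∘L (Ring.inverse (1 - ∑ k, z k • A₁ k)) ∘L (∑ k, z k • B₁ k) =
        ∑ k, z k • D k +
          (∑ k, z k • C k) ∘L (Ring.inverse (1 - ∑ k, z k • A k)) ∘L (∑ k, z k • B k)) := by
  obtain ⟨hred, hmin⟩ := hX₁
  have hemb := hred.isReducingEmbedding_subtype hA₁ hB₁ hC₁
  have hpencil (z : Fin Nn → ℂ) := IsReducingEmbedding.sum_smul hemb z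
  refine ⟨⟨fun k x hx ↦ ⟨hred.main_mem_orthogonal k hx, hred.output_eq_zero k hx⟩, ?_⟩,
    fun h ζ hζ ↦ ((hpencil ζ).norm_blockOp_le _).trans (h ζ hζ),
    fun h ζ hζ ↦ (hpencil ζ).isUnitaryOp_blockOp (h ζ hζ),
    fun z hz ↦ ((hpencil z).isUnit_and_transfer_eq hz).imp_right (congrArg _)⟩
  refine connectedSubspace_eq_top_of_range_le hemb fun Y hY ↦ ?_
  exact (Submodule.range_subtype X₁).trans_le (hmin hY)

/-- let `X₁` be the smallest closed subspace of `X` containing the ranges of all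
`B_k` and `C_j*` and invariant under all `A_k` and `A_k*`, and let
`α₁ = (N; A|X₁, B, C|X₁, D; X₁, N⁻, N⁺)` be the compressed system.  Then (i) each `A_k` maps
`X₁ᗮ` into `X₁ᗮ` and each `C_k` vanishes on `X₁ᗮ`, and `α₁` is closely connected; (ii) if `α`
is dissipative (resp. conservative) then so is `α₁`; (iii) the transfer functions of `α` and
`α₁` agree wherever both are defined on the open unit polydisc. -/
theorem compression_to_closely_connected {Nn : ℕ} {X Nm Np : Type*}
    [NormedAddCommGroup X] [InnerProductSpace ℂ X] [CompleteSpace X]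
    [TopologicalSpace.SeparableSpace X]
    [NormedAddCommGroup Nm] [InnerProductSpace ℂ Nm] [CompleteSpace Nm]
    [TopologicalSpace.SeparableSpace Nm]
    [NormedAddCommGroup Np] [InnerProductSpace ℂ Np] [CompleteSpace Np]
    [TopologicalSpace.SeparableSpace Np]
    (A : Fin Nn → (X →L[ℂ] X)) (B : Fin Nn → (Nm →L[ℂ] X))
    (C : Fin Nn → (X →L[ℂ] Np)) (D : Fin Nn → (Nm →L[ℂ] Np))
    (X₁ : Submodule ℂ X) [CompleteSpace X₁]
    (hX₁closed : IsClosed (X₁ : Set X))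
    (hB : ∀ k u, B k u ∈ X₁)
    (hC : ∀ j v, adjoint (C j) v ∈ X₁)
    (hA : ∀ k, ∀ x ∈ X₁, A k x ∈ X₁)
    (hAstar : ∀ k, ∀ x ∈ X₁, adjoint (A k) x ∈ X₁)
    (hmin : ∀ Y : Submodule ℂ X, IsClosed (Y : Set X) →
      (∀ k u, B k u ∈ Y) → (∀ j v, adjoint (C j) v ∈ Y) →
      (∀ k, ∀ x ∈ Y, A k x ∈ Y) → (∀ k, ∀ x ∈ Y, adjoint (A k) x ∈ Y) → X₁ ≤ Y)
    (A₁ : Fin Nn → (X₁ →L[ℂ] X₁)) (hA₁ : ∀ k (x : X₁), (A₁ k x : X) = A k x)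
    (B₁ : Fin Nn → (Nm →L[ℂ] X₁)) (hB₁ : ∀ k u, (B₁ k u : X) = B k u)
    (C₁ : Fin Nn → (X₁ →L[ℂ] Np)) (hC₁ : ∀ k (x : X₁), C₁ k x = C k x) :
    -- (i)
    ((∀ k : Fin Nn, ∀ x ∈ X₁ᗮ, A k x ∈ X₁ᗮ ∧ C k x = 0) ∧
      CloselyConnectedN A₁ B₁ C₁) ∧
    -- (ii)
    ((∀ ζ : Fin Nn → ℂ, (∀ k, ‖ζ k‖ = 1) →
        ‖blockOp (∑ k, ζ k • A k) (∑ k, ζ k • B k) (∑ k, ζ k • C k) (∑ k, ζ k • D k)‖ ≤ 1) →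
      (∀ ζ : Fin Nn → ℂ, (∀ k, ‖ζ k‖ = 1) →
        ‖blockOp (∑ k, ζ k • A₁ k) (∑ k, ζ k • B₁ k) (∑ k, ζ k • C₁ k)
            (∑ k, ζ k • D k)‖ ≤ 1)) ∧
    ((∀ ζ : Fin Nn → ℂ, (∀ k, ‖ζ k‖ = 1) →
        IsUnitaryOp
          (blockOp (∑ k, ζ k • A k) (∑ k, ζ k • B k) (∑ k, ζ k • C k) (∑ k, ζ k • D k))) →
      (∀ ζ : Fin Nn → ℂ, (∀ k, ‖ζ k‖ = 1) →
        IsUnitaryOp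
          (blockOp (∑ k, ζ k • A₁ k) (∑ k, ζ k • B₁ k) (∑ k, ζ k • C₁ k)
            (∑ k, ζ k • D k)))) ∧
    -- (iii)
    (∀ z : Fin Nn → ℂ, (∀ k, ‖z k‖ < 1) →
      IsUnit ((1 : X →L[ℂ] X) - ∑ k, z k • A k) →
      IsUnit ((1 : X₁ →L[ℂ] X₁) - ∑ k, z k • A₁ k) →
        ∑ k, z k • D k +
          (∑ k, z k • C₁ k) ∘L (Ring.inverse (1 - ∑ k, z k • A₁ k)) ∘L (∑ k, z k • B₁ k) =
        ∑ k, z k • D k +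
          (∑ k, z k • C k) ∘L (Ring.inverse (1 - ∑ k, z k • A k)) ∘L (∑ k, z k • B k)) := by
  obtain ⟨hconn, hdiss, hcons, htransfer⟩ := compression_to_closely_connected_general A B C D X₁
    ⟨⟨hX₁closed, hB, hC, hA, hAstar⟩, fun Y hY ↦ hmin Y hY.1 hY.2 hY.3 hY.4 hY.5⟩
    A₁ hA₁ B₁ hB₁ C₁ hC₁
  exact ⟨hconn, hdiss, hcons, fun z _ hz _ ↦ (htransfer z hz).2⟩
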